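/- arXiv:0710.4870 — 2 statements merged into one kernel-verified Lean document; each statement's English description precedes it below -/
import Mathlib

section
/- For every n ≥ 1, the indicator function of an A-type spherical polytope in Sⁿ⁻¹ cannot equal (up to a set of measure zero) a finite real linear combination of indicator functions of B-type spherical polytopes. -/
open Set Metric MeasureTheory
open scoped RealInnerProductSpace

noncomputable section

abbrev Euc (n : ℕ) : Type := EuclideanSpace ℝ (Fin n)

def unitSphere (n : ℕ) : Set (Euc n) := Metric.sphere 0 1

/-- A convex spherical polytope: the intersection of the unit sphere with finitely many
closed halfspaces whose boundary hyperplanes pass through the origin. -/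
def IsSphPolytope {n : ℕ} (Q : Set (Euc n)) : Prop :=
  ∃ C : Finset (Euc n), Q = unitSphere n ∩ ⋂ c ∈ C, {y : Euc n | 0 ≤ ⟪c, y⟫}

/-- The relative interior of a subset of the unit sphere, in the sphere. -/
def sphInterior {n : ℕ} (Q : Set (Euc n)) : Set (Euc n) :=
  {x | x ∈ Q ∧ ∃ ε > 0, ∀ y ∈ unitSphere n, dist y x < ε → y ∈ Q}

/-- A B-type set contains a pair of antipodal points of the sphere. -/
def IsBType {n : ℕ} (Q : Set (Euc n)) : Prop := ∃ x ∈ Q, -x ∈ Q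

section Combi
variable {E : Type*} [NormedAddCommGroup E] [InnerProductSpace ℝ E]

/-- Existence of an extreme ray. -/
lemma exists_extreme (C : Finset E) (hC : C.Nonempty) (x0 : E) (hx : ∀ c ∈ C, 0 < ⟪c, x0⟫) :
    ∃ v : E, (∀ c ∈ C, 0 ≤ ⟪c, v⟫) ∧ (∃ c ∈ C, 0 < ⟪c, v⟫) ∧
      ∀ w : E, (∀ c ∈ C, ⟪c, v⟫ = 0 → ⟪c, w⟫ = 0) → ∃ t : ℝ, ∀ c ∈ C, ⟪c, w - t • v⟫ = 0 := by
  classical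
  let feas : Set E := {v | (∀ c ∈ C, 0 ≤ ⟪c, v⟫) ∧ (∃ c ∈ C, 0 < ⟪c, v⟫)}
  let N : E → ℕ := fun v => (C.filter (fun c => 0 < ⟪c, v⟫)).card
  have hne : ∃ m, ∃ v ∈ feas, N v = m :=
    ⟨_, x0, ⟨fun c hc => (hx c hc).le, hC.choose, hC.choose_spec, hx _ hC.choose_spec⟩, rfl⟩
  obtain ⟨v, hv, hNv⟩ := Nat.find_spec hne
  refine ⟨v, hv.1, hv.2, fun w hw => ?_⟩
  obtain ⟨c1, hc1, hc1p⟩ := hv.2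
  obtain ⟨c0, hc0, hmin⟩ := Finset.exists_min_image (C.filter (fun c => 0 < ⟪c, v⟫))
    (fun c => ⟪c, w⟫ / ⟪c, v⟫) ⟨c1, by simp [hc1, hc1p]⟩
  simp only [Finset.mem_filter] at hc0 hmin
  set t := ⟪c0, w⟫ / ⟪c0, v⟫ with ht
  have hin : ∀ c, ⟪c, w - t • v⟫ = ⟪c, w⟫ - t * ⟪c, v⟫ := fun c => by
    rw [inner_sub_right, inner_smul_right]
  have h0 : ⟪c0, w - t • v⟫ = 0 := by
    rw [hin, ht, div_mul_cancel₀ _ hc0.2.ne', sub_self]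
  have hz : ∀ c ∈ C, ¬ 0 < ⟪c, v⟫ → ⟪c, w - t • v⟫ = 0 := fun c hc hn => by
    have : ⟪c, v⟫ = 0 := le_antisymm (not_lt.1 hn) (hv.1 c hc)
    rw [hin, this, hw c hc this]; simp
  have hnn : ∀ c ∈ C, 0 ≤ ⟪c, w - t • v⟫ := fun c hc => by
    by_cases hp : 0 < ⟪c, v⟫
    · have := hmin c ⟨hc, hp⟩
      rw [le_div_iff₀ hp] at this
      rw [hin]; linarith
    · exact (hz c hc hp).ge
  refine ⟨t, fun c hc => ?_⟩
  by_contra hcon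
  have hf : w - t • v ∈ feas := ⟨hnn, c, hc, lt_of_le_of_ne (hnn c hc) (Ne.symm hcon)⟩
  have hle : Nat.find hne ≤ N (w - t • v) := Nat.find_min' hne ⟨_, hf, rfl⟩
  rw [← hNv] at hle
  refine absurd hle (not_le.2 (Finset.card_lt_card ?_))
  rw [Finset.ssubset_iff_of_subset]
  · exact ⟨c0, by simp [hc0.1, hc0.2], by simp [h0]⟩
  · intro d hd
    simp only [Finset.mem_filter] at hd ⊢
    refine ⟨hd.1, ?_⟩
    by_contra hn
    exact hd.2.ne' (hz d hd.1 hn)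

/-- `j` is the leading index of `c` with respect to `v`. -/
def Lead {k : ℕ} (v : Fin k → E) (c : E) (j : Fin k) : Prop :=
  (∀ i < j, ⟪c, v i⟫ = 0) ∧ ⟪c, v j⟫ ≠ 0

lemma exists_flag (x0 : E) : ∀ (m : ℕ) (C : Finset E), C.card = m → (∀ c ∈ C, 0 < ⟪c, x0⟫) →
    ∃ (k : ℕ) (v : Fin k → E),
      (∀ c ∈ C, ∃ j, Lead v c j ∧ 0 < ⟪c, v j⟫) ∧
      (∀ j, ∃ c ∈ C, Lead v c j) ∧
      (∀ w : E, ∃ a : Fin k → ℝ, ∀ c ∈ C, ⟪c, w - ∑ i, a i • v i⟫ = 0) := by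
  classical
  intro m
  induction m using Nat.strong_induction_on with
  | _ m ih =>
  intro C hm hx
  rcases C.eq_empty_or_nonempty with rfl | hC
  · exact ⟨0, Fin.elim0, by simp, fun j => j.elim0, fun w => ⟨Fin.elim0, by simp⟩⟩
  obtain ⟨v1, hnn, ⟨c1, hc1, hp1⟩, hext⟩ := exists_extreme C hC x0 hx
  let C' := C.filter (fun c => ⟪c, v1⟫ = 0)
  have hlt : C'.card < m := by
    rw [← hm]
    refine Finset.card_lt_card ((Finset.ssubset_iff_of_subset (Finset.filter_subset _ _)).2
      ⟨c1, hc1, by simp [hp1.ne']⟩)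
  obtain ⟨k, v, hA, hB, hS⟩ := ih _ hlt C' rfl (fun c hc => hx c (Finset.mem_filter.1 hc).1)
  have hlead : ∀ c j, ⟪c, v1⟫ = 0 → Lead v c j → Lead (Fin.cons v1 v : Fin (k+1) → E) c j.succ := by
    intro c j h0 hl
    refine ⟨fun i hi => ?_, by simpa using hl.2⟩
    induction i using Fin.cases with
    | zero => simpa using h0
    | succ i => simpa using hl.1 i (by simpa using hi)
  refine ⟨k + 1, Fin.cons v1 v, ?_, ?_, ?_⟩
  · intro c hc
    by_cases h0 : ⟪c, v1⟫ = 0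
    · obtain ⟨j, hl, hp⟩ := hA c (by simp [C', hc, h0])
      exact ⟨j.succ, hlead c j h0 hl, by simpa using hp⟩
    · exact ⟨0, ⟨fun i hi => absurd hi (by simp), by simpa using h0⟩,
        by simpa using lt_of_le_of_ne (hnn c hc) (Ne.symm h0)⟩
  · intro j
    induction j using Fin.cases with
    | zero => exact ⟨c1, hc1, fun i hi => absurd hi (by simp), by simpa using hp1.ne'⟩
    | succ j =>
      obtain ⟨c, hc, hl⟩ := hB j
      have := Finset.mem_filter.1 hc
      exact ⟨c, this.1, hlead c j this.2 hl⟩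
  · intro w
    obtain ⟨a, ha⟩ := hS w
    obtain ⟨t, ht⟩ := hext (w - ∑ i, a i • v i)
      (fun c hc h0 => ha c (by simp [C', hc, h0]))
    refine ⟨Fin.cons t a, fun c hc => ?_⟩
    rw [← ht c hc, Fin.sum_univ_succ]
    congr 1
    simp only [Fin.cons_zero, Fin.cons_succ]
    abel

/-- Directions with common kernel miss some leading index. -/
lemma exists_missing {k : ℕ} (v : Fin k → E) (a : Fin k → ℝ) (hw : ∑ i, a i • v i ≠ 0) :
    ∃ j, ∀ c : E, ⟪c, ∑ i, a i • v i⟫ = 0 → ¬ Lead v c j := by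
  classical
  have hne : (Finset.univ.filter (fun i => a i ≠ 0)).Nonempty := by
    by_contra h
    rw [Finset.not_nonempty_iff_eq_empty] at h
    apply hw
    apply Finset.sum_eq_zero
    intro i _
    have : i ∉ Finset.univ.filter (fun i => a i ≠ 0) := by rw [h]; simp
    simp only [Finset.mem_filter, Finset.mem_univ, true_and, not_not] at this
    simp [this]
  let j := (Finset.univ.filter (fun i => a i ≠ 0)).max' hne
  have hj : a j ≠ 0 := (Finset.mem_filter.1 (Finset.max'_mem _ hne)).2
  refine ⟨j, fun c hc hl => ?_⟩
  rw [inner_sum, Finset.sum_eq_single j] at hc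
  · rw [inner_smul_right] at hc
    exact (mul_ne_zero hj hl.2) hc
  · intro i _ hij
    rw [inner_smul_right]
    rcases lt_or_gt_of_ne hij with h | h
    · simp [hl.1 i h]
    · have : a i = 0 := by
        by_contra h'
        exact absurd (Finset.le_max' (Finset.univ.filter (fun i => a i ≠ 0)) i (by simp [h'])) (not_le.2 h)
      simp [this]
  · simp

lemma exists_lead {k : ℕ} (v : Fin k → E) (hS : ∀ w : E, ∃ a : Fin k → ℝ, w = ∑ i, a i • v i)
    (c : E) (hc : c ≠ 0) : ∃ j, Lead v c j := by
  classical
  have hne : (Finset.univ.filter (fun i => ⟪c, v i⟫ ≠ 0)).Nonempty := by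
    by_contra h
    rw [Finset.not_nonempty_iff_eq_empty] at h
    apply hc
    obtain ⟨a, ha⟩ := hS c
    rw [← inner_self_eq_zero (𝕜 := ℝ)]
    conv_lhs => rw [ha]
    rw [← ha, ha, ← ha]
    have : ⟪c, ∑ i, a i • v i⟫ = 0 := by
      rw [inner_sum]
      apply Finset.sum_eq_zero
      intro i _
      have : i ∉ Finset.univ.filter (fun i => ⟪c, v i⟫ ≠ 0) := by rw [h]; simp
      simp only [Finset.mem_filter, Finset.mem_univ, true_and, not_not] at this
      simp [inner_smul_right, this]
    rwa [← ha] at this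
  refine ⟨(Finset.univ.filter (fun i => ⟪c, v i⟫ ≠ 0)).min' hne, fun i hi => ?_,
    (Finset.mem_filter.1 (Finset.min'_mem _ hne)).2⟩
  by_contra h'
  exact absurd (Finset.min'_le (Finset.univ.filter (fun i => ⟪c, v i⟫ ≠ 0)) i (by simp [h'])) (not_le.2 hi)

/-- the perturbed flag point -/
def pt {k : ℕ} (v : Fin k → E) (s : Fin k → ℤˣ) (ε : ℝ) : E :=
  ∑ i, (((s i : ℤ) : ℝ) * ε ^ (i : ℕ)) • v i

lemma pt_sign {k : ℕ} (v : Fin k → E) (s : Fin k → ℤˣ) (c : E) (j : Fin k) (hl : Lead v c j) :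
    ∀ᶠ ε in nhdsWithin (0:ℝ) (Ioi 0), 0 < ⟪c, pt v s ε⟫ * (((s j : ℤ) : ℝ) * ⟪c, v j⟫) := by
  let g : ℝ → ℝ := fun ε => ∑ i : Fin k, if i < j then 0 else
    (((s i : ℤ) : ℝ) * ε ^ ((i : ℕ) - (j : ℕ))) * ⟪c, v i⟫
  have hg : Continuous g := by
    apply continuous_finsetSum
    intro i _
    split_ifs <;> fun_prop
  have hs : ((s j : ℤ) : ℝ) ≠ 0 := by
    rcases Int.units_eq_one_or (s j) with h | h <;> simp [h]
  have hg0 : g 0 = ((s j : ℤ) : ℝ) * ⟪c, v j⟫ := by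
    simp only [g]
    rw [Finset.sum_eq_single j]
    · simp
    · intro i _ hij
      rcases lt_or_gt_of_ne hij with h | h
      · simp [h]
      · have h1 : (i : ℕ) - (j : ℕ) ≠ 0 := by have : (j:ℕ) < i := h; omega
        simp [h1]
    · simp
  have hev : ∀ᶠ ε in nhds (0:ℝ), 0 < g ε * (((s j : ℤ) : ℝ) * ⟪c, v j⟫) := by
    have hc : Continuous (fun ε => g ε * (((s j : ℤ) : ℝ) * ⟪c, v j⟫)) := by fun_prop
    refine hc.continuousAt.eventually (lt_mem_nhds ?_)
    change 0 < g 0 * _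
    rw [hg0]
    exact mul_self_pos.2 (mul_ne_zero hs hl.2)
  filter_upwards [nhdsWithin_le_nhds hev, self_mem_nhdsWithin] with ε h1 h2
  have h2 : 0 < ε := h2
  have : ⟪c, pt v s ε⟫ = ε ^ (j : ℕ) * g ε := by
    simp only [g, pt, inner_sum, inner_smul_right, Finset.mul_sum]
    apply Finset.sum_congr rfl
    intro i _
    split_ifs with h
    · simp [hl.1 i h]
    · have h3 : (j : ℕ) ≤ i := not_lt.1 h
      have : ε ^ (i : ℕ) = ε ^ (j : ℕ) * ε ^ ((i : ℕ) - (j : ℕ)) := by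
        rw [← pow_add]; congr 1; omega
      rw [this]; ring
  rw [this, mul_assoc]
  positivity

lemma sum_flip {k : ℕ} (j : Fin k) (F : (Fin k → ℤˣ) → ℝ)
    (hF : ∀ s, F (Function.update s j (-s j)) = F s) :
    ∑ s : Fin k → ℤˣ, ((∏ i, (s i : ℤ) : ℤ) : ℝ) * F s = 0 := by
  classical
  have hp : ∀ s : Fin k → ℤˣ, (∏ i, ((Function.update s j (-s j)) i : ℤ)) = - ∏ i, (s i : ℤ) := by
    intro s
    rw [← Finset.mul_prod_erase _ _ (Finset.mem_univ j),
      ← Finset.mul_prod_erase Finset.univ (fun i => (s i : ℤ)) (Finset.mem_univ j)]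
    rw [Finset.prod_congr rfl (g := fun i => (s i : ℤ))]
    · simp
    · intro i hi
      rw [Function.update_of_ne (Finset.ne_of_mem_erase hi)]
  refine Finset.sum_involution (fun s _ => Function.update s j (-s j)) ?_ ?_ ?_ ?_
  · intro s _
    rw [hF, hp]; push_cast; ring
  · intro s _ _ h
    have := congrFun h j
    simp only [Function.update_self] at this
    rcases Int.units_eq_one_or (s j) with h | h <;> rw [h] at this <;> revert this <;> decide
  · simp
  · intro s _
    simp

/-- The combinatorial core. -/
lemma core (C : Finset E) (hC0 : ∀ c ∈ C, c ≠ 0) (x0 : E) (hx : ∀ c ∈ C, 0 < ⟪c, x0⟫)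
    (hpt : ∀ w : E, (∀ c ∈ C, ⟪c, w⟫ = 0) → w = 0) (hE : ∃ e : E, e ≠ 0)
    (m : ℕ) (Q : Fin m → Finset E) (hQ0 : ∀ i, ∀ c ∈ Q i, c ≠ 0)
    (hQ : ∀ i, ∃ w : E, w ≠ 0 ∧ ∀ c ∈ Q i, ⟪c, w⟫ = 0) (α : Fin m → ℝ)
    (h : ∀ x : E, x ≠ 0 → (∀ c ∈ C, ⟪c, x⟫ ≠ 0) → (∀ i, ∀ c ∈ Q i, ⟪c, x⟫ ≠ 0) →
      Set.indicator {y | ∀ c ∈ C, 0 ≤ ⟪c, y⟫} (fun _ => (1 : ℝ)) x =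
      ∑ i, α i * Set.indicator {y | ∀ c ∈ Q i, 0 ≤ ⟪c, y⟫} (fun _ => (1 : ℝ)) x) : False := by
  classical
  obtain ⟨k, v, hA, hB, hS⟩ := exists_flag x0 _ C rfl hx
  have hS' : ∀ w : E, ∃ a : Fin k → ℝ, w = ∑ i, a i • v i := fun w => by
    obtain ⟨a, ha⟩ := hS w
    exact ⟨a, sub_eq_zero.1 (hpt _ ha)⟩
  let D : Finset E := C ∪ Finset.univ.biUnion Q
  have hD0 : ∀ c ∈ D, c ≠ 0 := by
    intro c hc
    simp only [D, Finset.mem_union, Finset.mem_biUnion, Finset.mem_univ, true_and] at hc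
    rcases hc with hc | ⟨i, hc⟩
    exacts [hC0 c hc, hQ0 i c hc]
  have hCD : ∀ c ∈ C, c ∈ D := fun c hc => by simp [D, hc]
  have hQD : ∀ i, ∀ c ∈ Q i, c ∈ D := fun i c hc => by
    simp only [D, Finset.mem_union, Finset.mem_biUnion, Finset.mem_univ, true_and]
    exact Or.inr ⟨i, hc⟩
  have hev : ∀ᶠ ε in nhdsWithin (0:ℝ) (Ioi 0), ∀ c ∈ D, ∀ s : Fin k → ℤˣ, ∀ j, Lead v c j →
      0 < ⟪c, pt v s ε⟫ * (((s j : ℤ) : ℝ) * ⟪c, v j⟫) := by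
    rw [Filter.eventually_all_finset]
    intro c _
    rw [Filter.eventually_all]
    intro s
    rw [Filter.eventually_all]
    intro j
    by_cases hl : Lead v c j
    · filter_upwards [pt_sign v s c j hl] with ε h _ using h
    · exact Filter.Eventually.of_forall fun _ h => absurd h hl
  obtain ⟨ε, hε⟩ := hev.exists
  have hnz : ∀ c ∈ D, ∀ s, ⟪c, pt v s ε⟫ ≠ 0 := by
    intro c hc s h0
    obtain ⟨j, hj⟩ := exists_lead v hS' c (hD0 c hc)
    have := hε c hc s j hj
    simp [h0] at this
  have hCne : ∃ c, c ∈ C := by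
    by_contra hcon
    push Not at hcon
    obtain ⟨e, he⟩ := hE
    exact he (hpt e fun c hc => absurd hc (hcon c))
  obtain ⟨c1, hc1⟩ := hCne
  have heq := fun s => h (pt v s ε) (fun h0 => hnz c1 (hCD _ hc1) s (by simp [h0]))
    (fun c hc => hnz c (hCD c hc) s) (fun i c hc => hnz c (hQD i c hc) s)
  have hsum : ∑ s : Fin k → ℤˣ, ((∏ i, (s i : ℤ) : ℤ) : ℝ) *
      Set.indicator {y | ∀ c ∈ C, 0 ≤ ⟪c, y⟫} (fun _ => (1 : ℝ)) (pt v s ε) = 0 := by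
    simp_rw [heq, Finset.mul_sum]
    rw [Finset.sum_comm]
    apply Finset.sum_eq_zero
    intro i _
    obtain ⟨w, hw0, hw⟩ := hQ i
    obtain ⟨a, ha⟩ := hS' w
    rw [ha] at hw0 hw
    obtain ⟨j, hj⟩ := exists_missing v a hw0
    refine sum_flip j (fun s => α i * Set.indicator {y | ∀ c ∈ Q i, 0 ≤ ⟪c, y⟫} (fun _ => (1 : ℝ))
      (pt v s ε)) fun s => ?_
    congr 1
    have key : (∀ c ∈ Q i, 0 ≤ ⟪c, pt v (Function.update s j (-s j)) ε⟫) ↔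
        (∀ c ∈ Q i, 0 ≤ ⟪c, pt v s ε⟫) := by
      refine forall₂_congr fun c hc => ?_
      obtain ⟨l, hl⟩ := exists_lead v hS' c (hQ0 i c hc)
      have hlj : l ≠ j := by rintro rfl; exact hj c (hw c hc) hl
      have h1 := hε c (hQD i c hc) s l hl
      have h2 := hε c (hQD i c hc) (Function.update s j (-s j)) l hl
      rw [Function.update_of_ne hlj] at h2
      rcases pos_and_pos_or_neg_and_neg_of_mul_pos h1 with ⟨p1, q1⟩ | ⟨p1, q1⟩ <;>
      rcases pos_and_pos_or_neg_and_neg_of_mul_pos h2 with ⟨p2, q2⟩ | ⟨p2, q2⟩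
      · exact iff_of_true p2.le p1.le
      · exact absurd q1 q2.not_gt
      · exact absurd q2 q1.not_gt
      · exact iff_of_false p2.not_ge p1.not_ge
    simp only [Set.indicator, Set.mem_ofPred_eq, key]
  rw [Finset.sum_eq_single (fun _ => 1)] at hsum
  · rw [Set.indicator_of_mem] at hsum
    · simp at hsum
    · intro c hc
      obtain ⟨j, hl, hp⟩ := hA c hc
      have := hε c (hCD c hc) (fun _ => 1) j hl
      simp only [Units.val_one, Int.cast_one, one_mul] at this
      exact (pos_of_mul_pos_left this hp.le).le
  · intro s _ hs
    rw [Set.indicator_of_notMem, mul_zero]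
    intro hmem
    apply hs
    funext j
    obtain ⟨c, hc, hl⟩ := hB j
    obtain ⟨j', hl', hp⟩ := hA c hc
    have hjj : j = j' := by
      rcases lt_trichotomy j j' with h | h | h
      · exact absurd (hl'.1 j h) hl.2
      · exact h
      · exact absurd (hl.1 j' h) hl'.2
    subst hjj
    have h1 := hε c (hCD c hc) s j hl
    have h2 := pos_of_mul_pos_right h1 (hmem c hc)
    rcases Int.units_eq_one_or (s j) with h | h
    · exact h
    · rw [h] at h2
      simp at h2
      linarith
  · simp
end Combi

lemma mem_unitSphere {n : ℕ} (x : Euc n) : x ∈ unitSphere n ↔ ‖x‖ = 1 := by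
  simp [unitSphere]

lemma hausdorff_pos (m : ℕ) (x : Euc (m+1)) (hx : x ∈ unitSphere (m+1)) (U : Set (Euc (m+1)))
    (hU : U ∈ nhds x) : (μH[(m : ℝ)] : Measure (Euc (m+1))) (unitSphere (m+1) ∩ U) ≠ 0 := by
  rw [mem_unitSphere] at hx
  have hx2 : ∑ i, x i ^ 2 = 1 := by
    rw [← EuclideanSpace.real_norm_sq_eq, hx]; norm_num
  obtain ⟨j, hj⟩ : ∃ j, x j ≠ 0 := by
    by_contra hcon
    push Not at hcon
    simp [hcon] at hx2
  let σ : ℝ := SignType.sign (x j)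
  have hσ : σ ^ 2 = 1 := by
    rcases lt_or_gt_of_ne hj with h | h <;> simp [σ, h]
  let f : Euc (m+1) → (Fin m → ℝ) := fun y i => y (j.succAbove i)
  have hf : LipschitzWith 1 f := by
    refine LipschitzWith.of_dist_le_mul fun y z => ?_
    rw [NNReal.coe_one, one_mul, dist_pi_le_iff dist_nonneg]
    intro i
    have := PiLp.norm_apply_le (y - z) (j.succAbove i)
    rw [dist_eq_norm, dist_eq_norm]
    simpa [f] using this
  let g : (Fin m → ℝ) → Euc (m+1) := fun z =>
    WithLp.toLp 2 (j.insertNth (α := fun _ => ℝ) (σ * √(1 - ∑ i, z i ^ 2)) z)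
  have hg : Continuous g := by
    refine (PiLp.continuous_toLp 2 _).comp ?_
    refine continuous_pi fun i => ?_
    refine Fin.succAboveCases j ?_ (fun l => ?_) i
    · simp only [Fin.insertNth_apply_same]; fun_prop
    · simp only [Fin.insertNth_apply_succAbove]; fun_prop
  rw [Fin.sum_univ_succAbove _ j] at hx2
  have hgx : g (f x) = x := by
    have h1 : 1 - ∑ i, f x i ^ 2 = x j ^ 2 := by simp only [f]; linarith
    ext i
    refine Fin.succAboveCases j ?_ (fun l => ?_) i
    · simp only [g, Fin.insertNth_apply_same, h1, Real.sqrt_sq_eq_abs]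
      exact sign_mul_abs _
    · simp [g, f]
  have hW : {z | g z ∈ U ∧ ∑ i, z i ^ 2 < 1} ∈ nhds (f x) := by
    refine Filter.inter_mem ?_ ?_
    · exact hg.continuousAt (by rw [hgx]; exact hU)
    · have hc : Continuous (fun z : Fin m → ℝ => ∑ i, z i ^ 2) := by fun_prop
      refine hc.continuousAt.eventually (gt_mem_nhds ?_)
      have : 0 < x j ^ 2 := by positivity
      change ∑ i, x (j.succAbove i) ^ 2 < 1
      linarith
  have hsub : {z | g z ∈ U ∧ ∑ i, z i ^ 2 < 1} ⊆ f '' (unitSphere (m+1) ∩ U) := by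
    rintro z ⟨hz1, hz2⟩
    refine ⟨g z, ⟨?_, hz1⟩, by funext i; simp [f, g]⟩
    rw [mem_unitSphere]
    have : ‖g z‖ ^ 2 = 1 := by
      rw [EuclideanSpace.real_norm_sq_eq, Fin.sum_univ_succAbove _ j]
      simp only [g, Fin.insertNth_apply_same, Fin.insertNth_apply_succAbove]
      rw [mul_pow, hσ, Real.sq_sqrt (by linarith)]
      ring
    have h0 := norm_nonneg (g z)
    nlinarith
  intro h0
  have h1 := hf.hausdorffMeasure_image_le (d := (m : ℝ)) (by positivity) (unitSphere (m+1) ∩ U)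
  rw [h0, mul_zero] at h1
  have h2 : (volume : Measure (Fin m → ℝ)) (f '' (unitSphere (m+1) ∩ U)) = 0 := by
    rw [← hausdorffMeasure_pi_real]
    simpa using h1
  exact (MeasureTheory.Measure.measure_pos_of_mem_nhds volume hW).ne' (measure_mono_null hsub h2)

lemma interior_pos {n : ℕ} (C : Finset (Euc n)) (P : Set (Euc n))
    (hP : P = unitSphere n ∩ ⋂ c ∈ C, {y : Euc n | 0 ≤ ⟪c, y⟫}) (x : Euc n)
    (hx : x ∈ sphInterior P) (c : Euc n) (hc : c ∈ C) (hc0 : c ≠ 0) : 0 < ⟪c, x⟫ := by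
  obtain ⟨hxP, ε, hε, hball⟩ := hx
  subst hP
  have hx1 := (mem_unitSphere x).1 hxP.1
  have hge : ∀ y ∈ unitSphere n, dist y x < ε → 0 ≤ ⟪c, y⟫ := fun y hy hd => by
    have := (hball y hy hd).2
    simp only [mem_iInter, mem_ofPred_eq] at this
    exact this c hc
  refine lt_of_le_of_ne (hge x hxP.1 (by simpa using hε)) fun h0 => ?_
  let φ : ℝ → Euc n := fun t => ‖x - t • c‖⁻¹ • (x - t • c)
  have hφ : ContinuousAt φ 0 := by
    have h1 : ContinuousAt (fun t : ℝ => x - t • c) 0 := by fun_prop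
    exact (h1.norm.inv₀ (by simp [hx1])).smul h1
  have hφ0 : φ 0 = x := by simp [φ, hx1]
  have hev : ∀ᶠ t in nhds (0:ℝ), dist (φ t) x < ε := by
    have := hφ.eventually (Metric.ball_mem_nhds _ hε)
    rw [hφ0] at this
    exact this
  have hev' : ∀ᶠ t in nhdsWithin (0:ℝ) (Ioi 0), dist (φ t) x < ε := nhdsWithin_le_nhds hev
  obtain ⟨t, ht, htpos⟩ := (hev'.and self_mem_nhdsWithin).exists
  have htpos : 0 < t := htpos
  have hcc : 0 < ⟪c, c⟫ := real_inner_self_pos.2 hc0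
  have hin : ⟪c, x - t • c⟫ < 0 := by
    rw [inner_sub_right, inner_smul_right, ← h0]
    nlinarith
  have hne : x - t • c ≠ 0 := by rintro h; rw [h] at hin; simp at hin
  have hn : 0 < ‖x - t • c‖⁻¹ := by positivity
  have := hge (φ t) (by
    rw [mem_unitSphere, norm_smul, norm_inv, norm_norm, inv_mul_cancel₀ (norm_ne_zero_iff.2 hne)]) ht
  simp only [φ, inner_smul_right] at this
  nlinarith

/-- The indicator of a full-dimensional A-type spherical polytope is not equal, up to a
set of `(n-1)`-dimensional Hausdorff measure zero on the sphere, to a finite real linear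
combination of indicators of full-dimensional B-type spherical polytopes. -/
theorem atype_not_lincomb_of_btype (n : ℕ) (hn : 1 ≤ n)
    (P : Set (Euc n)) (hP : IsSphPolytope P) (hPfull : (sphInterior P).Nonempty)
    (hPA : ¬ IsBType P) :
    ¬ ∃ (k : ℕ) (Q : Fin k → Set (Euc n)) (α : Fin k → ℝ),
      (∀ i, IsSphPolytope (Q i) ∧ (sphInterior (Q i)).Nonempty ∧ IsBType (Q i)) ∧
      (∀ᵐ x ∂((μH[((n : ℝ) - 1)] : Measure (Euc n)).restrict (unitSphere n)),
        Set.indicator P (fun _ => (1 : ℝ)) x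
          = ∑ i, α i * Set.indicator (Q i) (fun _ => (1 : ℝ)) x) := by
  classical
  rintro ⟨k, Q, α, hQ, hae⟩
  obtain ⟨C, hC⟩ := hP
  choose D hD using fun i => (hQ i).1
  obtain ⟨x0, hx0⟩ := hPfull
  have hx1 : ‖x0‖ = 1 := by
    have := hx0.1
    rw [hC] at this
    exact (mem_unitSphere x0).1 this.1
  have hmem : ∀ (A : Finset (Euc n)) (x : Euc n), x ∈ unitSphere n →
      (x ∈ unitSphere n ∩ ⋂ c ∈ A, {y : Euc n | 0 ≤ ⟪c, y⟫} ↔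
        ∀ c ∈ A.filter (fun c => c ≠ 0), 0 ≤ ⟪c, x⟫) := by
    intro A x hx
    simp only [mem_inter_iff, hx, true_and, mem_iInter, mem_ofPred_eq, Finset.mem_filter]
    refine ⟨fun h c hc => h c hc.1, fun h c hc => ?_⟩
    by_cases h0 : c = 0
    · simp [h0]
    · exact h c ⟨hc, h0⟩
  refine core (C.filter (fun c => c ≠ 0)) (fun c hc => (Finset.mem_filter.1 hc).2) x0
    (fun c hc => interior_pos C P hC x0 hx0 c (Finset.mem_filter.1 hc).1 (Finset.mem_filter.1 hc).2)
    ?_ ⟨x0, by rintro rfl; simp at hx1⟩ k (fun i => (D i).filter (fun c => c ≠ 0))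
    (fun i c hc => (Finset.mem_filter.1 hc).2) ?_ α ?_
  · intro w hw
    by_contra hw0
    have hs : ‖w‖⁻¹ • w ∈ unitSphere n := by
      rw [mem_unitSphere, norm_smul, norm_inv, norm_norm, inv_mul_cancel₀ (norm_ne_zero_iff.2 hw0)]
    refine hPA ⟨‖w‖⁻¹ • w, ?_, ?_⟩
    · rw [hC, hmem C _ hs]
      intro c hc
      rw [inner_smul_right, hw c hc, mul_zero]
    · rw [hC, hmem C _ (by rw [mem_unitSphere, norm_neg]; exact (mem_unitSphere _).1 hs)]
      intro c hc
      rw [inner_neg_right, inner_smul_right, hw c hc, mul_zero, neg_zero]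
  · intro i
    obtain ⟨x, hx, hx'⟩ := (hQ i).2.2
    rw [hD i] at hx hx'
    have h1 := (hmem _ _ hx.1).1 hx
    have h2 := (hmem _ _ hx'.1).1 hx'
    refine ⟨x, ?_, fun c hc => ?_⟩
    · rintro rfl
      have := (mem_unitSphere _).1 hx.1
      simp at this
    · have a1 := h1 c hc
      have a2 := h2 c hc
      rw [inner_neg_right] at a2
      linarith
  · intro x hx hxC hxD
    have hr : 0 < ‖x‖⁻¹ := by positivity
    set u := ‖x‖⁻¹ • x with hu
    have hus : u ∈ unitSphere n := by
      rw [mem_unitSphere, norm_smul, norm_inv, norm_norm, inv_mul_cancel₀ (norm_ne_zero_iff.2 hx)]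
    have hev : ∀ c : Euc n, ⟪c, x⟫ ≠ 0 → ∀ᶠ y in nhds u, (0 ≤ ⟪c, y⟫ ↔ 0 ≤ ⟪c, x⟫) := by
      intro c hc
      have hcont : Continuous (fun y : Euc n => ⟪c, y⟫) := by fun_prop
      have hcu : ⟪c, u⟫ = ‖x‖⁻¹ * ⟪c, x⟫ := by rw [hu, inner_smul_right]
      rcases lt_or_gt_of_ne hc with h | h
      · have : ⟪c, u⟫ < 0 := by rw [hcu]; exact mul_neg_of_pos_of_neg hr h
        filter_upwards [hcont.continuousAt.eventually (gt_mem_nhds this)] with y hy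
        exact iff_of_false hy.not_ge h.not_ge
      · have : 0 < ⟪c, u⟫ := by rw [hcu]; exact mul_pos hr h
        filter_upwards [hcont.continuousAt.eventually (lt_mem_nhds this)] with y hy
        exact iff_of_true hy.le h.le
    have hevC : ∀ᶠ y in nhds u, ∀ c ∈ C.filter (fun c => c ≠ 0), (0 ≤ ⟪c, y⟫ ↔ 0 ≤ ⟪c, x⟫) := by
      rw [Filter.eventually_all_finset]
      exact fun c hc => hev c (hxC c hc)
    have hevD : ∀ᶠ y in nhds u, ∀ i, ∀ c ∈ (D i).filter (fun c => c ≠ 0),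
        (0 ≤ ⟪c, y⟫ ↔ 0 ≤ ⟪c, x⟫) := by
      rw [Filter.eventually_all]
      intro i
      rw [Filter.eventually_all_finset]
      exact fun c hc => hev c (hxD i c hc)
    obtain ⟨m, rfl⟩ : ∃ m, n = m + 1 := ⟨n - 1, by omega⟩
    have hdim : (((m + 1 : ℕ) : ℝ) - 1) = (m : ℝ) := by push_cast; ring
    rw [hdim] at hae
    have hmeas : MeasurableSet (unitSphere (m+1)) := Metric.isClosed_sphere.measurableSet
    rw [ae_restrict_iff' hmeas] at hae
    obtain ⟨y, hys, hyC, hyD, hyeq⟩ : ∃ y ∈ unitSphere (m+1),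
        (∀ c ∈ C.filter (fun c => c ≠ 0), (0 ≤ ⟪c, y⟫ ↔ 0 ≤ ⟪c, x⟫)) ∧
        (∀ i, ∀ c ∈ (D i).filter (fun c => c ≠ 0), (0 ≤ ⟪c, y⟫ ↔ 0 ≤ ⟪c, x⟫)) ∧
        Set.indicator P (fun _ => (1 : ℝ)) y
          = ∑ i, α i * Set.indicator (Q i) (fun _ => (1 : ℝ)) y := by
      by_contra hcon
      push Not at hcon
      refine hausdorff_pos m u hus _ (hevC.and hevD) (measure_mono_null ?_ hae)
      rintro y ⟨hy1, hy2, hy3⟩ hy4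
      exact hcon y hy1 hy2 hy3 (hy4 hy1)
    have hPy : y ∈ P ↔ ∀ c ∈ C.filter (fun c => c ≠ 0), 0 ≤ ⟪c, x⟫ := by
      rw [hC, hmem C y hys]
      exact forall₂_congr hyC
    have hQy : ∀ i, y ∈ Q i ↔ ∀ c ∈ (D i).filter (fun c => c ≠ 0), 0 ≤ ⟪c, x⟫ := by
      intro i
      rw [hD i, hmem (D i) y hys]
      exact forall₂_congr (hyD i)
    simp only [Set.indicator, hPy, hQy] at hyeq
    simpa only [Set.indicator, Set.mem_ofPred_eq] using hyeq
end
end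

section
/- Let a finite tiling of the unit sphere Sⁿ (n > 1) by convex spherical polytopes contain exactly two A-type polytopes P and P′. If x is a vertex of P, then either x or −x is a vertex of P′. -/
open Set Metric
open scoped RealInnerProductSpace

noncomputable section

/-- A finite tiling of the sphere by full-dimensional convex spherical polytopes with
pairwise disjoint (relative) interiors. -/
def IsSphTiling {n : ℕ} (𝒯 : Finset (Set (Euc n))) : Prop :=
  (∀ Q ∈ 𝒯, IsSphPolytope Q ∧ (sphInterior Q).Nonempty) ∧
  (⋃ Q ∈ 𝒯, Q) = unitSphere n ∧
  ∀ Q ∈ 𝒯, ∀ Q' ∈ 𝒯, Q ≠ Q' → sphInterior Q ∩ sphInterior Q' = ∅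

/-- `v` is a vertex (0-dimensional exposed face) of the spherical polytope `Q`. -/
def IsSphVertex {n : ℕ} (Q : Set (Euc n)) (v : Euc n) : Prop :=
  ∃ u : Euc n, (∀ y ∈ Q, 0 ≤ ⟪u, y⟫) ∧ {y ∈ Q | ⟪u, y⟫ = 0} = {v}


open Filter Topology

theorem aux_poly_pos : ∀ (m : ℕ) (a : Fin m → ℝ) (j : Fin m), (∀ i < j, a i = 0) → 0 < a j →
    ∀ᶠ ε in 𝓝[>] (0 : ℝ), 0 < ∑ i : Fin m, ε ^ (i : ℕ) * a i := by
  intro m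
  induction m with
  | zero => intro a j; exact j.elim0
  | succ m ih =>
    intro a j h0 hj
    have key : ∀ ε : ℝ, ∑ i : Fin (m + 1), ε ^ (i : ℕ) * a i
        = a 0 + ε * ∑ i : Fin m, ε ^ (i : ℕ) * a i.succ := by
      intro ε
      rw [Fin.sum_univ_succ, Finset.mul_sum]
      simp [pow_succ']
      exact Finset.sum_congr rfl fun i _ => by ring
    induction j using Fin.cases with
    | zero =>
      have hc : Continuous fun ε : ℝ => ∑ i : Fin (m + 1), ε ^ (i : ℕ) * a i := by fun_prop
      have := hc.tendsto 0
      have h1 : (0 : ℝ) < ∑ i : Fin (m + 1), (0 : ℝ) ^ (i : ℕ) * a i := by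
        rw [key]; simpa using hj
      exact (this.eventually (lt_mem_nhds h1)).filter_mono nhdsWithin_le_nhds
    | succ j =>
      have := ih (fun i => a i.succ) j (fun i hi => h0 _ (by simpa using hi)) hj
      filter_upwards [this, self_mem_nhdsWithin] with ε h1 h2
      rw [key, h0 0 (Fin.succ_pos j), zero_add]
      exact mul_pos h2 h1

theorem aux_exists_ray {d : ℕ} (S : Finset (Euc d)) (hS : S.Nonempty) (y : Euc d)
    (hy : ∀ c ∈ S, 0 < ⟪c, y⟫) :
    ∃ v : Euc d, (∀ c ∈ S, 0 ≤ ⟪c, v⟫) ∧ (∃ c ∈ S, 0 < ⟪c, v⟫) ∧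
      ∀ w : Euc d, (∀ c ∈ S, ⟪c, v⟫ = 0 → ⟪c, w⟫ = 0) →
        ∃ a : ℝ, ∀ c ∈ S, ⟪c, w⟫ = a * ⟪c, v⟫ := by
  classical
  let f : Euc d → ℕ := fun v => (S.filter fun c => ⟪c, v⟫ ≠ 0).card
  let A : Set (Euc d) := {v | (∀ c ∈ S, 0 ≤ ⟪c, v⟫) ∧ (∃ c ∈ S, 0 < ⟪c, v⟫)}
  have hA : A.Nonempty := ⟨y, fun c hc => (hy c hc).le, by
    obtain ⟨c, hc⟩ := hS; exact ⟨c, hc, hy c hc⟩⟩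
  obtain ⟨v, hv, hmin⟩ : ∃ v ∈ A, ∀ v' ∈ A, f v ≤ f v' := by
    refine ⟨Function.argminOn f A hA, Function.argminOn_mem f A hA, fun v' hv' => ?_⟩
    exact Function.argminOn_le f A hv'
  refine ⟨v, hv.1, hv.2, fun w hw => ?_⟩
  obtain ⟨c1, hc1, hc1'⟩ := hv.2
  obtain ⟨c0, hc0, hr⟩ := Finset.exists_min_image (S.filter fun c => ⟪c, v⟫ ≠ 0)
    (fun c => ⟪c, w⟫ / ⟪c, v⟫) ⟨c1, by simp [hc1, hc1'.ne']⟩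
  simp only [Finset.mem_filter] at hc0 hr
  set a : ℝ := ⟪c0, w⟫ / ⟪c0, v⟫ with ha
  have hin : ∀ c : Euc d, ⟪c, w - a • v⟫ = ⟪c, w⟫ - a * ⟪c, v⟫ := fun c => by
    rw [inner_sub_right, real_inner_smul_right]
  have hnn : ∀ c ∈ S, 0 ≤ ⟪c, w - a • v⟫ := by
    intro c hc
    rw [hin]
    by_cases h : ⟪c, v⟫ = 0
    · simp [h, hw c hc h]
    · have h1 := hr c ⟨hc, h⟩
      have h2 : 0 < ⟪c, v⟫ := lt_of_le_of_ne (hv.1 c hc) (Ne.symm h)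
      have := (le_div_iff₀ h2).1 h1
      linarith
  refine ⟨a, fun c hc => ?_⟩
  by_contra hne
  have hmem : (w - a • v) ∈ A := by
    refine ⟨hnn, c, hc, lt_of_le_of_ne (hnn c hc) ?_⟩
    rw [hin]; intro h; exact hne (by linarith)
  have hle := hmin _ hmem
  have hlt : f (w - a • v) < f v := by
    apply Finset.card_lt_card
    rw [Finset.ssubset_iff_of_subset]
    · refine ⟨c0, by simp [hc0.1, hc0.2], ?_⟩
      simp only [Finset.mem_filter, not_and, not_not]
      intro _
      rw [hin, ha, div_mul_cancel₀ _ hc0.2, sub_self]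
    · intro c hc
      simp only [Finset.mem_filter] at hc ⊢
      refine ⟨hc.1, fun h => hc.2 ?_⟩
      rw [hin, h, hw c hc.1 h]; simp
  omega

theorem aux_exists_flag {d : ℕ} (y : Euc d) (S : Finset (Euc d)) :
    (∀ c ∈ S, 0 < ⟪c, y⟫) →
    ∃ (m : ℕ) (v : Fin m → Euc d),
      (∀ c ∈ S, ∃ j, (∀ i < j, ⟪c, v i⟫ = 0) ∧ 0 < ⟪c, v j⟫) ∧
      (∀ j, ∃ c ∈ S, (∀ i < j, ⟪c, v i⟫ = 0) ∧ 0 < ⟪c, v j⟫) ∧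
      ∀ w : Euc d, ∃ a : Fin m → ℝ, ∀ c ∈ S, ⟪c, w⟫ = ∑ j, a j * ⟪c, v j⟫ := by
  classical
  induction S using Finset.strongInduction with
  | H S ih =>
    intro hy
    rcases S.eq_empty_or_nonempty with rfl | hS
    · exact ⟨0, Fin.elim0, by simp, fun j => j.elim0, fun w => ⟨Fin.elim0, by simp⟩⟩
    obtain ⟨v0, h0, ⟨c1, hc1, hc1'⟩, hp⟩ := aux_exists_ray S hS y hy
    obtain ⟨m, v, h1, h2, h3⟩ := ih (S.filter fun c => ⟪c, v0⟫ = 0)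
      (by
        rw [Finset.ssubset_iff_of_subset (Finset.filter_subset _ _)]
        exact ⟨c1, hc1, by simp [hc1'.ne']⟩)
      (fun c hc => hy c (Finset.filter_subset _ _ hc))
    refine ⟨m + 1, Fin.cons v0 v, ?_, ?_, ?_⟩
    · intro c hc
      by_cases h : ⟪c, v0⟫ = 0
      · obtain ⟨j, hj, hj'⟩ := h1 c (by simp [hc, h])
        refine ⟨j.succ, fun i hi => ?_, by simpa using hj'⟩
        induction i using Fin.cases with
        | zero => simpa using h
        | succ i => simpa using hj i (by simpa using hi)
      · refine ⟨0, fun i hi => absurd hi (by simp), ?_⟩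
        simpa using lt_of_le_of_ne (h0 c hc) (Ne.symm h)
    · intro j
      induction j using Fin.cases with
      | zero => exact ⟨c1, hc1, fun i hi => absurd hi (by simp), by simpa using hc1'⟩
      | succ j =>
        obtain ⟨c, hc, hj, hj'⟩ := h2 j
        simp only [Finset.mem_filter] at hc
        refine ⟨c, hc.1, fun i hi => ?_, by simpa using hj'⟩
        induction i using Fin.cases with
        | zero => simpa using hc.2
        | succ i => simpa using hj i (by simpa using hi)
    · intro w
      obtain ⟨a, ha⟩ := h3 w
      obtain ⟨b, hb⟩ := hp (w - ∑ j, a j • v j) (by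
        intro c hc h
        rw [inner_sub_right, inner_sum, ha c (by simp [hc, h])]
        simp [real_inner_smul_right])
      refine ⟨Fin.cons b a, fun c hc => ?_⟩
      have := hb c hc
      rw [inner_sub_right, inner_sum] at this
      simp only [real_inner_smul_right] at this
      rw [Fin.sum_univ_succ]
      simp only [Fin.cons_zero, Fin.cons_succ]
      linarith

/-- `j` is the leading index of `c` with respect to `v`. -/
def AuxLead {d M : ℕ} (v : Fin M → Euc d) (c : Euc d) (j : Fin M) : Prop :=
  (∀ i < j, ⟪c, v i⟫ = 0) ∧ ⟪c, v j⟫ ≠ 0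

theorem aux_exists_lead {d M : ℕ} (v : Fin M → Euc d)
    (hv : ∀ w : Euc d, ∃ a : Fin M → ℝ, w = ∑ j, a j • v j) (c : Euc d) (hc : c ≠ 0) :
    ∃ j, AuxLead v c j := by
  classical
  have hex : {j | ⟪c, v j⟫ ≠ 0}.Nonempty := by
    by_contra h
    have h' : ∀ j, ⟪c, v j⟫ = 0 := by
      intro j; by_contra hj; exact h ⟨j, hj⟩
    obtain ⟨a, ha⟩ := hv c
    apply hc
    rw [← inner_self_eq_zero (𝕜 := ℝ)]
    nth_rewrite 2 [ha]
    rw [inner_sum]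
    simp [real_inner_smul_right, h']
  refine ⟨wellFounded_lt.min _ hex, fun i hi => ?_, wellFounded_lt.min_mem _ hex⟩
  by_contra h
  exact wellFounded_lt.not_lt_min _ h hi

theorem aux_lead_unique {d M : ℕ} {v : Fin M → Euc d} {c : Euc d} {j k : Fin M}
    (hj : AuxLead v c j) (hk : AuxLead v c k) : j = k := by
  rcases lt_trichotomy j k with h | h | h
  · exact absurd (hk.1 j h) hj.2
  · exact h
  · exact absurd (hj.1 k h) hk.2

theorem aux_exists_points {d M : ℕ} (v : Fin M → Euc d) (F : Finset (Euc d)) :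
    ∃ z : (Fin M → ℤˣ) → Euc d, ∀ c ∈ F, ∀ s j, AuxLead v c j →
      0 < (((s j : ℤ) : ℝ) * ⟪c, v j⟫) * ⟪c, z s⟫ := by
  have : ∀ᶠ ε in 𝓝[>] (0 : ℝ), ∀ c ∈ F, ∀ s : Fin M → ℤˣ, ∀ j, AuxLead v c j →
      0 < (((s j : ℤ) : ℝ) * ⟪c, v j⟫) *
        ⟪c, ∑ i : Fin M, (ε ^ (i : ℕ) * ((s i : ℤ) : ℝ)) • v i⟫ := by
    rw [Finset.eventually_all]
    intro c _
    rw [eventually_all]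
    intro s
    rw [eventually_all]
    intro j
    by_cases hl : AuxLead v c j
    · have hs : ((s j : ℤ) : ℝ) ≠ 0 := by
        have := (s j).ne_zero
        exact_mod_cast this
      have h2 := mul_ne_zero hs hl.2
      have := aux_poly_pos M
        (fun i => (((s j : ℤ) : ℝ) * ⟪c, v j⟫) * (((s i : ℤ) : ℝ) * ⟪c, v i⟫)) j
        (fun i hi => by simp [hl.1 i hi]) (mul_self_pos.2 h2)
      filter_upwards [this] with ε hε _
      rw [inner_sum, Finset.mul_sum]
      refine lt_of_lt_of_eq hε (Finset.sum_congr rfl fun i _ => ?_)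
      rw [real_inner_smul_right]; ring
    · exact Eventually.of_forall fun _ h => absurd h hl
  obtain ⟨ε, hε⟩ := this.exists
  exact ⟨_, hε⟩

/-- Membership of `y` in the cone with normals `C`. -/
def AuxMem {d : ℕ} (C : Finset (Euc d)) (y : Euc d) : Prop := ∀ c ∈ C, 0 ≤ ⟪c, y⟫

/-- The sign of a sign vector. -/
def auxSgn {M : ℕ} (s : Fin M → ℤˣ) : ℝ := ∏ i, ((s i : ℤ) : ℝ)

theorem auxSgn_flip {M : ℕ} (s : Fin M → ℤˣ) (k : Fin M) :
    auxSgn (s * Pi.mulSingle k (-1)) = - auxSgn s := by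
  have h : (∏ i, (Pi.mulSingle k (-1) : Fin M → ℤˣ) i) = -1 := by
    rw [Finset.prod_pi_mulSingle']; simp
  have h3 : ∀ t : Fin M → ℤˣ, auxSgn t = (((∏ i, t i : ℤˣ) : ℤ) : ℝ) := by
    intro t; simp [auxSgn, Units.coe_prod]
  rw [h3, h3]
  simp only [Pi.mul_apply]
  rw [Finset.prod_mul_distrib, h]; simp

open Classical in
/-- The signed count of points in a cone. -/
def auxMu {d M : ℕ} (z : (Fin M → ℤˣ) → Euc d) (C : Finset (Euc d)) : ℝ :=
  ∑ s, if AuxMem C (z s) then auxSgn s else 0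

theorem aux_sum_zero {M : ℕ} (k : Fin M) (p : (Fin M → ℤˣ) → Prop) [DecidablePred p]
    (hp : ∀ s, p s → p (s * Pi.mulSingle k (-1))) :
    ∑ s, (if p s then auxSgn s else 0) = 0 := by
  have hinv : ∀ s : Fin M → ℤˣ, s * Pi.mulSingle k (-1) * Pi.mulSingle k (-1) = s := by
    intro s
    rw [mul_assoc, ← Pi.mulSingle_mul]; simp
  refine Finset.sum_involution (fun s _ => s * Pi.mulSingle k (-1)) ?_ ?_ ?_ ?_
  · intro s _
    have : p s ↔ p (s * Pi.mulSingle k (-1)) :=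
      ⟨hp s, fun h => by have := hp _ h; rwa [hinv] at this⟩
    simp only [← this]
    split_ifs
    · rw [auxSgn_flip]; ring
    · simp
  · intro s _ _ h
    have := congrFun h k
    simp at this
  · intro s _; simp
  · intro s _; exact hinv s

theorem aux_mu_flip {d M : ℕ} (v : Fin M → Euc d)
    (hv : ∀ w : Euc d, ∃ a : Fin M → ℝ, w = ∑ j, a j • v j)
    (z : (Fin M → ℤˣ) → Euc d) (C : Finset (Euc d))
    (hz : ∀ c ∈ C, ∀ s j, AuxLead v c j →
      0 < (((s j : ℤ) : ℝ) * ⟪c, v j⟫) * ⟪c, z s⟫)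
    (k : Fin M) (hk : ∀ c ∈ C, ¬ AuxLead v c k) : auxMu z C = 0 := by
  classical
  unfold auxMu
  refine (Finset.sum_congr rfl fun s _ => ?_).trans
    (aux_sum_zero k (fun s => AuxMem C (z s)) ?_)
  · congr
  intro s hs c hc
  by_cases h0 : c = 0
  · simp [h0]
  obtain ⟨j, hj⟩ := aux_exists_lead v hv c h0
  have hjk : j ≠ k := fun h => hk c hc (h ▸ hj)
  have h1 := hz c hc s j hj
  have h2 := hz c hc (s * Pi.mulSingle k (-1)) j hj
  have h3 : (s * Pi.mulSingle k (-1) : Fin M → ℤˣ) j = s j := by simp [hjk]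
  rw [h3] at h2
  have h4 := hs c hc
  have h5 := pos_of_mul_pos_left h1 h4
  exact ((pos_iff_pos_of_mul_pos h2).1 h5).le

theorem aux_mem_iff {d : ℕ} {Q : Set (Euc d)} {C : Finset (Euc d)}
    (hQ : Q = unitSphere d ∩ ⋂ c ∈ C, {y : Euc d | 0 ≤ ⟪c, y⟫}) (y : Euc d) :
    y ∈ Q ↔ ‖y‖ = 1 ∧ AuxMem C y := by
  rw [hQ]; simp [unitSphere, AuxMem]

theorem aux_normalize {d : ℕ} {Q : Set (Euc d)} {C : Finset (Euc d)}
    (hQ : Q = unitSphere d ∩ ⋂ c ∈ C, {y : Euc d | 0 ≤ ⟪c, y⟫}) (y : Euc d) (hy : y ≠ 0) :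
    ‖y‖⁻¹ • y ∈ Q ↔ AuxMem C y := by
  rw [aux_mem_iff hQ]
  have h : 0 < ‖y‖⁻¹ := inv_pos.2 (norm_pos_iff.2 hy)
  have h1 : ‖‖y‖⁻¹ • y‖ = 1 := by
    rw [norm_smul, norm_inv, norm_norm, inv_mul_cancel₀ (norm_ne_zero_iff.2 hy)]
  simp only [h1, true_and, AuxMem, real_inner_smul_right, mul_nonneg_iff_of_pos_left h]

theorem aux_pos_interior {d : ℕ} {Q : Set (Euc d)} {C : Finset (Euc d)}
    (hQ : Q = unitSphere d ∩ ⋂ c ∈ C, {y : Euc d | 0 ≤ ⟪c, y⟫}) (y : Euc d) (hy : ‖y‖ = 1)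
    (hp : ∀ c ∈ C, c ≠ 0 → 0 < ⟪c, y⟫) : y ∈ sphInterior Q := by
  have hev : ∀ᶠ y' in 𝓝 y, AuxMem C y' := by
    unfold AuxMem
    rw [Finset.eventually_all]
    intro c hc
    by_cases h0 : c = 0
    · simp [h0]
    · have hcont : Continuous fun y' : Euc d => ⟪c, y'⟫ := by fun_prop
      exact (hcont.tendsto y).eventually (lt_mem_nhds (hp c hc h0)) |>.mono fun _ h => le_of_lt h
  obtain ⟨ε, hε, h⟩ := Metric.eventually_nhds_iff.1 hev
  refine ⟨(aux_mem_iff hQ y).2 ⟨hy, hev.self_of_nhds⟩, ε, hε, fun y' hy' hd => ?_⟩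
  exact (aux_mem_iff hQ y').2 ⟨by simpa [unitSphere] using hy', h hd⟩

theorem aux_interior_pos {d : ℕ} {Q : Set (Euc d)} {C : Finset (Euc d)}
    (hQ : Q = unitSphere d ∩ ⋂ c ∈ C, {y : Euc d | 0 ≤ ⟪c, y⟫}) (y : Euc d)
    (hy : y ∈ sphInterior Q) : ∀ c ∈ C, c ≠ 0 → 0 < ⟪c, y⟫ := by
  intro c hc h0
  obtain ⟨hyQ, ε, hε, h⟩ := hy
  obtain ⟨hn, hm⟩ := (aux_mem_iff hQ y).1 hyQ
  refine lt_of_le_of_ne (hm c hc) fun heq => ?_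
  have hcc : 0 < ⟪c, c⟫ := real_inner_self_pos.2 h0
  have hy0 : y ≠ 0 := by rintro rfl; simp at hn
  let g : ℝ → Euc d := fun t => ‖y - t • c‖⁻¹ • (y - t • c)
  have hne : ∀ t : ℝ, y - t • c ≠ 0 := by
    intro t ht
    have h1 : ⟪y, y - t • c⟫ = 1 := by
      rw [inner_sub_right, real_inner_smul_right, real_inner_comm c y, ← heq,
        real_inner_self_eq_norm_sq, hn]; simp
    rw [ht] at h1; simp at h1
  have hg : Continuous g := by
    have h1 : Continuous fun t : ℝ => y - t • c := by fun_prop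
    exact (h1.norm.inv₀ fun t => norm_ne_zero_iff.2 (hne t)).smul h1
  have hg0 : g 0 = y := by simp [g, hn]
  have hev : ∀ᶠ t in 𝓝[>] (0 : ℝ), dist (g t) y < ε := by
    have h1 := hg.tendsto 0
    rw [hg0] at h1
    exact (h1.eventually (Metric.ball_mem_nhds y hε)).filter_mono nhdsWithin_le_nhds
  obtain ⟨t, ht, ht0⟩ := (hev.and self_mem_nhdsWithin).exists
  have ht0 : 0 < t := ht0
  have h1 : g t ∈ Q := h _ (by
    simp only [unitSphere, mem_sphere_iff_norm, sub_zero, g]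
    rw [norm_smul, norm_inv, norm_norm, inv_mul_cancel₀ (norm_ne_zero_iff.2 (hne t))]) ht
  have h2 := (aux_normalize hQ _ (hne t)).1 h1 c hc
  rw [inner_sub_right, ← heq, real_inner_smul_right] at h2
  nlinarith [mul_pos ht0 hcc]

theorem aux_vertex_imp {d : ℕ} {Q : Set (Euc d)} {C : Finset (Euc d)}
    (hQ : Q = unitSphere d ∩ ⋂ c ∈ C, {y : Euc d | 0 ≤ ⟪c, y⟫}) (x : Euc d)
    (hx : IsSphVertex Q x) (w : Euc d) (hw : ∀ c ∈ C, ⟪c, x⟫ = 0 → ⟪c, w⟫ = 0) :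
    ∃ a : ℝ, w = a • x := by
  obtain ⟨u, hu, hux⟩ := hx
  have hxm : x ∈ Q ∧ ⟪u, x⟫ = 0 := by
    have : x ∈ {y ∈ Q | ⟪u, y⟫ = 0} := by rw [hux]; rfl
    exact this
  obtain ⟨hn, hm⟩ := (aux_mem_iff hQ x).1 hxm.1
  refine ⟨⟪x, w⟫, ?_⟩
  set w0 := w - ⟪x, w⟫ • x with hw0
  suffices h : w0 = 0 from sub_eq_zero.1 h
  have hxx : ⟪x, x⟫ = 1 := by rw [real_inner_self_eq_norm_sq, hn]; simp
  have hxw : ⟪x, w0⟫ = 0 := by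
    rw [hw0, inner_sub_right, real_inner_smul_right, hxx]; ring
  have hev : ∀ᶠ t in 𝓝 (0 : ℝ), AuxMem C (x + t • w0) := by
    unfold AuxMem
    rw [Finset.eventually_all]
    intro c hc
    by_cases h0 : ⟪c, x⟫ = 0
    · refine Eventually.of_forall fun t => le_of_eq ?_
      rw [hw0, inner_add_right, real_inner_smul_right, inner_sub_right, real_inner_smul_right,
        hw c hc h0, h0]; simp
    · have hcont : Continuous fun t : ℝ => ⟪c, x + t • w0⟫ := by fun_prop
      have h1 : 0 < ⟪c, x + (0 : ℝ) • w0⟫ := by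
        simpa using lt_of_le_of_ne (hm c hc) (Ne.symm h0)
      exact (hcont.tendsto 0).eventually (lt_mem_nhds h1) |>.mono fun _ h => le_of_lt h
  obtain ⟨ε, hε, h⟩ := Metric.eventually_nhds_iff.1 hev
  have hne : ∀ t : ℝ, x + t • w0 ≠ 0 := by
    intro t ht
    have h1 : ⟪x, x + t • w0⟫ = 1 := by
      rw [inner_add_right, real_inner_smul_right, hxw, hxx]; simp
    rw [ht] at h1; simp at h1
  have hmem : ∀ t : ℝ, |t| < ε → ‖x + t • w0‖⁻¹ • (x + t • w0) ∈ Q := fun t ht =>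
    (aux_normalize hQ _ (hne t)).2 (h (by simpa using ht))
  have hin : ∀ t : ℝ, |t| < ε → 0 ≤ t * ⟪u, w0⟫ := by
    intro t ht
    have h1 := hu _ (hmem t ht)
    rw [real_inner_smul_right, inner_add_right, hxm.2, real_inner_smul_right, zero_add] at h1
    exact (mul_nonneg_iff_of_pos_left (inv_pos.2 (norm_pos_iff.2 (hne t)))).1 h1
  have hab : |ε / 2| < ε := by rw [abs_of_pos (by linarith)]; linarith
  have huw : ⟪u, w0⟫ = 0 := by
    have h1 := hin (ε / 2) hab
    have h2 := hin (-(ε / 2)) (by rwa [abs_neg])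
    nlinarith
  have h3 : ‖x + (ε / 2) • w0‖⁻¹ • (x + (ε / 2) • w0) ∈ {y ∈ Q | ⟪u, y⟫ = 0} := by
    refine ⟨hmem _ hab, ?_⟩
    rw [real_inner_smul_right, inner_add_right, hxm.2, real_inner_smul_right, huw]; simp
  rw [hux, mem_singleton_iff] at h3
  have h4 : ⟪w0, ‖x + (ε / 2) • w0‖⁻¹ • (x + (ε / 2) • w0)⟫ = 0 := by
    rw [h3, real_inner_comm, hxw]
  rw [real_inner_smul_right, inner_add_right, real_inner_comm, hxw, zero_add,
    real_inner_smul_right] at h4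
  have h5 := inv_ne_zero (norm_ne_zero_iff.2 (hne (ε / 2)))
  have h6 : ⟪w0, w0⟫ = 0 := by
    rcases mul_eq_zero.1 h4 with h | h
    · exact absurd h h5
    · rcases mul_eq_zero.1 h with h | h
      · linarith
      · exact h
  exact inner_self_eq_zero.1 h6

theorem aux_imp_vertex {d : ℕ} {Q : Set (Euc d)} {C : Finset (Euc d)}
    (hQ : Q = unitSphere d ∩ ⋂ c ∈ C, {y : Euc d | 0 ≤ ⟪c, y⟫}) (hA : ¬ IsBType Q)
    (x : Euc d) (hx : x ∈ Q)
    (hw : ∀ w : Euc d, (∀ c ∈ C, ⟪c, x⟫ = 0 → ⟪c, w⟫ = 0) → ∃ a : ℝ, w = a • x) :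
    IsSphVertex Q x := by
  classical
  have hin : ∀ y : Euc d, ⟪∑ c ∈ C.filter (fun c => ⟪c, x⟫ = 0), c, y⟫
      = ∑ c ∈ C.filter (fun c => ⟪c, x⟫ = 0), ⟪c, y⟫ := fun y => sum_inner _ _ _
  refine ⟨∑ c ∈ C.filter (fun c => ⟪c, x⟫ = 0), c, fun y hy => ?_, ?_⟩
  · rw [hin]
    exact Finset.sum_nonneg fun c hc =>
      ((aux_mem_iff hQ y).1 hy).2 c (Finset.filter_subset _ _ hc)
  · ext y
    simp only [mem_ofPred_eq, mem_singleton_iff]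
    constructor
    · rintro ⟨hy, h0⟩
      obtain ⟨hyn, hym⟩ := (aux_mem_iff hQ y).1 hy
      rw [hin, Finset.sum_eq_zero_iff_of_nonneg
        (fun c hc => hym c (Finset.filter_subset _ _ hc))] at h0
      obtain ⟨a, rfl⟩ := hw y fun c hc hcx => h0 c (by simp [hc, hcx])
      rw [norm_smul, ((aux_mem_iff hQ x).1 hx).1, mul_one, Real.norm_eq_abs] at hyn
      rcases eq_or_eq_neg_of_abs_eq hyn with rfl | rfl
      · simp
      · exact absurd ⟨x, hx, by simpa using hy⟩ hA
    · rintro rfl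
      refine ⟨hx, ?_⟩
      rw [hin]
      exact Finset.sum_eq_zero fun c hc => (Finset.mem_filter.1 hc).2

theorem aux_exists_last {M : ℕ} (a : Fin M → ℝ) (i : Fin M) (hi : a i ≠ 0) :
    ∃ k, i ≤ k ∧ a k ≠ 0 ∧ ∀ j, k < j → a j = 0 := by
  classical
  obtain ⟨k, hk, hmax⟩ := Finset.exists_max_image
    (Finset.univ.filter fun k => a k ≠ 0) id ⟨i, by simpa using hi⟩
  simp only [Finset.mem_filter, Finset.mem_univ, true_and, id] at hk hmax
  refine ⟨k, hmax i hi, hk, fun j hj => ?_⟩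
  by_contra h
  exact absurd hj (not_lt.2 (hmax j h))

theorem aux_not_lead {d M : ℕ} (v : Fin M → Euc d) (a : Fin M → ℝ) (k : Fin M) (hk : a k ≠ 0)
    (hl : ∀ j, k < j → a j = 0) (c : Euc d) (hc : ⟪c, ∑ j, a j • v j⟫ = 0) :
    ¬ AuxLead v c k := by
  rintro ⟨h1, h2⟩
  rw [inner_sum, Finset.sum_eq_single k] at hc
  · rw [real_inner_smul_right] at hc
    exact mul_ne_zero hk h2 hc
  · intro j _ hj
    rw [real_inner_smul_right]
    rcases lt_or_gt_of_ne hj with h | h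
    · rw [h1 j h, mul_zero]
    · rw [hl j h, zero_mul]
  · simp

/-- If a tiling of `Sⁿ` (with `n > 1`) by convex spherical polytopes contains exactly
two A-type polytopes `P, P'` and `x` is a vertex of `P`, then `x` or `-x` is a vertex
of `P'`. -/
theorem exactly_two_atype (n : ℕ) (hn : 1 < n) (𝒯 : Finset (Set (Euc (n + 1))))
    (h𝒯 : IsSphTiling 𝒯)
    (P P' : Set (Euc (n + 1))) (hP : P ∈ 𝒯) (hP' : P' ∈ 𝒯) (hne : P ≠ P')
    (hPA : ¬ IsBType P) (hP'A : ¬ IsBType P')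
    (honly : ∀ Q ∈ 𝒯, ¬ IsBType Q → Q = P ∨ Q = P')
    (x : Euc (n + 1)) (hx : IsSphVertex P x) :
    IsSphVertex P' x ∨ IsSphVertex P' (-x) := by
  classical
  obtain ⟨hpoly, hcov, hdisj⟩ := h𝒯
  choose! C hC using fun Q hQ => (hpoly Q hQ).1
  obtain ⟨y0, hy0⟩ := (hpoly P hP).2
  have hy0p := aux_interior_pos (hC P hP) y0 hy0
  have hxP : x ∈ P := by
    obtain ⟨u, _, hux⟩ := hx
    have : x ∈ {y ∈ P | ⟪u, y⟫ = 0} := by rw [hux]; rfl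
    exact this.1
  obtain ⟨hxn, hxm⟩ := (aux_mem_iff (hC P hP) x).1 hxP
  have hx0 : x ≠ 0 := by rintro rfl; simp at hxn
  obtain ⟨m, v', h1, h2, h3⟩ := aux_exists_flag y0
    ((C P).filter fun c => c ≠ 0 ∧ ⟪c, x⟫ = 0) (fun c hc => by
      simp only [Finset.mem_filter] at hc
      exact hy0p c hc.1 hc.2.1)
  let v : Fin (m + 1) → Euc (n + 1) := Fin.cons x v'
  have hv0 : v 0 = x := rfl
  have hvs : ∀ i : Fin m, v i.succ = v' i := fun i => rfl
  have hv : ∀ w : Euc (n + 1), ∃ a : Fin (m + 1) → ℝ, w = ∑ j, a j • v j := by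
    intro w
    obtain ⟨a, ha⟩ := h3 w
    obtain ⟨b, hb⟩ := aux_vertex_imp (hC P hP) x hx (w - ∑ j, a j • v' j) (by
      intro c hc hcx
      by_cases h0 : c = 0
      · simp [h0]
      rw [inner_sub_right, inner_sum, ha c (by simp [hc, h0, hcx])]
      simp [real_inner_smul_right])
    refine ⟨Fin.cons b a, ?_⟩
    rw [Fin.sum_univ_succ]
    simp only [Fin.cons_zero, Fin.cons_succ, hv0, hvs, ← hb]
    abel
  obtain ⟨z, hz⟩ := aux_exists_points v (insert x (𝒯.biUnion C))
  have hzQ : ∀ Q ∈ 𝒯, ∀ c ∈ C Q, ∀ s j, AuxLead v c j →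
      0 < (((s j : ℤ) : ℝ) * ⟪c, v j⟫) * ⟪c, z s⟫ := fun Q hQ c hc =>
    hz c (Finset.mem_insert_of_mem (Finset.mem_biUnion.2 ⟨Q, hQ, hc⟩))
  have hz0 : ∀ s, z s ≠ 0 := by
    intro s h
    obtain ⟨j, hj⟩ := aux_exists_lead v hv x hx0
    have := hz x (Finset.mem_insert_self _ _) s j hj
    rw [h] at this; simp at this
  have hstrict : ∀ Q ∈ 𝒯, ∀ c ∈ C Q, c ≠ 0 → ∀ s, ⟪c, z s⟫ ≠ 0 := by
    intro Q hQ c hc h0 s h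
    obtain ⟨j, hj⟩ := aux_exists_lead v hv c h0
    have := hzQ Q hQ c hc s j hj
    rw [h] at this; simp at this
  have hint : ∀ Q ∈ 𝒯, ∀ s, AuxMem (C Q) (z s) → ‖z s‖⁻¹ • z s ∈ sphInterior Q := by
    intro Q hQ s hs
    refine aux_pos_interior (hC Q hQ) _ ?_ fun c hc h0 => ?_
    · rw [norm_smul, norm_inv, norm_norm, inv_mul_cancel₀ (norm_ne_zero_iff.2 (hz0 s))]
    · rw [real_inner_smul_right]
      exact mul_pos (inv_pos.2 (norm_pos_iff.2 (hz0 s)))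
        (lt_of_le_of_ne (hs c hc) (Ne.symm (hstrict Q hQ c hc h0 s)))
  have hcount : ∀ s, ∑ Q ∈ 𝒯, (if AuxMem (C Q) (z s) then auxSgn s else 0) = auxSgn s := by
    intro s
    have hmem : ‖z s‖⁻¹ • z s ∈ ⋃ Q ∈ 𝒯, Q := by
      rw [hcov]
      simp only [unitSphere, mem_sphere_iff_norm, sub_zero]
      rw [norm_smul, norm_inv, norm_norm, inv_mul_cancel₀ (norm_ne_zero_iff.2 (hz0 s))]
    simp only [mem_iUnion] at hmem
    obtain ⟨Q, hQ, hmem⟩ := hmem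
    have hm := (aux_normalize (hC Q hQ) _ (hz0 s)).1 hmem
    rw [Finset.sum_eq_single Q]
    · rw [if_pos hm]
    · intro Q' hQ' hne'
      rw [if_neg]
      intro hm'
      have : ‖z s‖⁻¹ • z s ∈ sphInterior Q' ∩ sphInterior Q :=
        ⟨hint Q' hQ' s hm', hint Q hQ s hm⟩
      rw [hdisj Q' hQ' Q hQ hne'] at this
      exact this
    · exact fun h => absurd hQ h
  have htotal : ∑ Q ∈ 𝒯, auxMu z (C Q) = 0 := by
    unfold auxMu
    rw [Finset.sum_comm, Finset.sum_congr rfl fun s _ => hcount s]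
    simpa using aux_sum_zero (M := m + 1) 0 (fun _ => True) (fun _ _ => trivial)
  have hB : ∀ Q ∈ 𝒯, Q ≠ P → Q ≠ P' → auxMu z (C Q) = 0 := by
    intro Q hQ hq hq'
    have hb : IsBType Q := by
      by_contra h
      rcases honly Q hQ h with h | h
      · exact hq h
      · exact hq' h
    obtain ⟨w, hw, hw'⟩ := hb
    obtain ⟨hwn, hwm⟩ := (aux_mem_iff (hC Q hQ) w).1 hw
    have hwm' := ((aux_mem_iff (hC Q hQ) (-w)).1 hw').2
    have hw0 : w ≠ 0 := by rintro rfl; simp at hwn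
    obtain ⟨a, ha⟩ := hv w
    have : ∃ i, a i ≠ 0 := by
      by_contra h
      push Not at h
      exact hw0 (by rw [ha]; simp [h])
    obtain ⟨i, hi⟩ := this
    obtain ⟨k, _, hk, hl⟩ := aux_exists_last a i hi
    refine aux_mu_flip v hv z (C Q) (hzQ Q hQ) k fun c hc => aux_not_lead v a k hk hl c ?_
    rw [← ha]
    have e1 := hwm c hc
    have e2 := hwm' c hc
    rw [inner_neg_right] at e2
    linarith
  have hmuP : auxMu z (C P) = 1 := by
    have hlead : ∀ c ∈ C P, c ≠ 0 → ∃ j, AuxLead v c j ∧ 0 < ⟪c, v j⟫ := by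
      intro c hc h0
      by_cases hcx : ⟪c, x⟫ = 0
      · obtain ⟨j, hj, hj'⟩ := h1 c (by simp [hc, h0, hcx])
        refine ⟨j.succ, ⟨fun i hi => ?_, hj'.ne'⟩, hj'⟩
        induction i using Fin.cases with
        | zero => exact hcx
        | succ i => exact hj i (by simpa using hi)
      · have hp : 0 < ⟪c, x⟫ := lt_of_le_of_ne (hxm c hc) (Ne.symm hcx)
        exact ⟨0, ⟨fun i hi => absurd hi (by simp), hcx⟩, hp⟩
    have hhit : ∀ j, ∃ c ∈ C P, AuxLead v c j ∧ 0 < ⟪c, v j⟫ := by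
      intro j
      induction j using Fin.cases with
      | zero =>
        have : ¬ AuxMem (C P) (-x) := fun h =>
          hPA ⟨x, hxP, (aux_mem_iff (hC P hP) _).2 ⟨by rwa [norm_neg], h⟩⟩
        unfold AuxMem at this
        push Not at this
        obtain ⟨c, hc, hcx⟩ := this
        rw [inner_neg_right] at hcx
        have hp : 0 < ⟪c, x⟫ := by linarith
        exact ⟨c, hc, ⟨fun i hi => absurd hi (by simp), hp.ne'⟩, hp⟩
      | succ j =>
        obtain ⟨c, hc, hj, hj'⟩ := h2 j
        simp only [Finset.mem_filter] at hc
        refine ⟨c, hc.1, ⟨fun i hi => ?_, hj'.ne'⟩, hj'⟩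
        induction i using Fin.cases with
        | zero => exact hc.2.2
        | succ i => exact hj i (by simpa using hi)
    unfold auxMu
    rw [Finset.sum_eq_single 1]
    · rw [if_pos]
      · simp [auxSgn]
      · intro c hc
        by_cases h0 : c = 0
        · simp [h0]
        obtain ⟨j, hj, hp⟩ := hlead c hc h0
        have := hzQ P hP c hc 1 j hj
        simp only [Pi.one_apply, Units.val_one, Int.cast_one, one_mul] at this
        exact ((pos_iff_pos_of_mul_pos this).1 hp).le
    · intro s _ hs
      rw [if_neg]
      intro hm
      apply hs
      funext j
      obtain ⟨c, hc, hj, hp⟩ := hhit j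
      have h5 := hzQ P hP c hc s j hj
      have h6 := pos_of_mul_pos_left h5 (hm c hc)
      rcases Int.units_eq_one_or (s j) with h | h
      · simpa using h
      · rw [h] at h6
        simp at h6
        linarith
    · simp
  have hsum2 : auxMu z (C P) + auxMu z (C P') = 0 := by
    rw [← htotal, ← Finset.sum_pair (f := fun Q => auxMu z (C Q)) hne]
    refine Finset.sum_subset ?_ ?_
    · intro Q hQ
      simp only [Finset.mem_insert, Finset.mem_singleton] at hQ
      rcases hQ with rfl | rfl <;> assumption
    · intro Q hQ hq
      simp only [Finset.mem_insert, Finset.mem_singleton, not_or] at hq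
      exact hB Q hQ hq.1 hq.2
  have hmuP' : auxMu z (C P') ≠ 0 := by
    intro h; rw [hmuP, h] at hsum2; norm_num at hsum2
  have hrigid : ∀ w : Euc (n + 1), (∀ c ∈ C P', ⟪c, x⟫ = 0 → ⟪c, w⟫ = 0) →
      ∃ a : ℝ, w = a • x := by
    intro w hw
    by_contra hnot
    obtain ⟨a, ha⟩ := hv w
    have : ∃ i : Fin m, a i.succ ≠ 0 := by
      by_contra h
      push Not at h
      refine hnot ⟨a 0, ?_⟩
      rw [ha, Fin.sum_univ_succ]
      simp [h, hv0]
    obtain ⟨i, hi⟩ := this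
    obtain ⟨k, hik, hk, hl⟩ := aux_exists_last a i.succ hi
    refine hmuP' (aux_mu_flip v hv z (C P') (hzQ P' hP') k fun c hc => ?_)
    by_cases hcx : ⟪c, x⟫ = 0
    · refine aux_not_lead v a k hk hl c ?_
      rw [← ha]
      exact hw c hc hcx
    · intro hlk
      exact hcx (hlk.1 0 (lt_of_lt_of_le (Fin.succ_pos i) hik))
  have hmem : AuxMem (C P') x ∨ AuxMem (C P') (-x) := by
    by_contra h
    push Not at h
    unfold AuxMem at h
    push Not at h
    obtain ⟨⟨c, hc, hcx⟩, c', hc', hcx'⟩ := h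
    rw [inner_neg_right] at hcx'
    apply hmuP'
    unfold auxMu
    refine Finset.sum_eq_zero fun s _ => if_neg fun hm => ?_
    have e1 := pos_of_mul_pos_left (hzQ P' hP' c hc s 0
      ⟨fun i hi => absurd hi (by simp), hcx.ne⟩) (hm c hc)
    have e2 := pos_of_mul_pos_left (hzQ P' hP' c' hc' s 0
      ⟨fun i hi => absurd hi (by simp), by rw [hv0]; intro h; linarith⟩) (hm c' hc')
    rw [hv0] at e1 e2
    rcases Int.units_eq_one_or (s 0) with h | h
    · rw [h] at e1 e2
      simp at e1 e2
      linarith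
    · rw [h] at e1 e2
      simp at e1 e2
      linarith
  rcases hmem with h | h
  · exact Or.inl (aux_imp_vertex (hC P' hP') hP'A x ((aux_mem_iff (hC P' hP') x).2 ⟨hxn, h⟩) hrigid)
  · refine Or.inr (aux_imp_vertex (hC P' hP') hP'A (-x)
      ((aux_mem_iff (hC P' hP') (-x)).2 ⟨by rwa [norm_neg], h⟩) fun w hw => ?_)
    obtain ⟨a, ha⟩ := hrigid w fun c hc hcx => hw c hc (by rw [inner_neg_right, hcx, neg_zero])
    exact ⟨-a, by simp [ha]⟩
end
end
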